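/- Behavioral cloning performance bound: Let π and π* be any two policies in a finite MDP, and suppose π(a|s) > 0 for every state s with d^{π*}(s) > 0 and every action a with π*(a|s) > 0. Then PerfDiff(π, π*) ≤ (R_max/(1−γ)²) · √( 2 · ∑_{s∈S} d^{π*}(s) · D_KL(π*(·|s) ‖ π(·|s)) ). -/

import Mathlib

open Finset

noncomputable section

variable {S A Z : Type*}

/-- State distribution at time `t` when following policy `π` from initial distribution `μ`. -/
def stateDist [Fintype S] [Fintype A] (P : S → A → S → ℝ) (π : S → A → ℝ)
    (μ : S → ℝ) : ℕ → S → ℝ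
  | 0 => μ
  | t + 1 => fun s' => ∑ s : S, ∑ a : A, π s a * P s a s' * stateDist P π μ t s

/-- Discounted visitation distribution `d^π`. -/
def visitation [Fintype S] [Fintype A] (P : S → A → S → ℝ) (π : S → A → ℝ)
    (μ : S → ℝ) (γ : ℝ) (s : S) : ℝ :=
  (1 - γ) * ∑' t : ℕ, γ ^ t * stateDist P π μ t s

/-- Performance `J(π)`. -/
def perf [Fintype S] [Fintype A] (P : S → A → S → ℝ) (R : S → A → ℝ)
    (π : S → A → ℝ) (μ : S → ℝ) (γ : ℝ) : ℝ :=
  ∑' t : ℕ, γ ^ t * ∑ s : S, ∑ a : A, R s a * π s a * stateDist P π μ t s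

/-- `PerfDiff(π, π')`. -/
def perfDiff [Fintype S] [Fintype A] (P : S → A → S → ℝ) (R : S → A → ℝ)
    (μ : S → ℝ) (γ : ℝ) (π π' : S → A → ℝ) : ℝ :=
  |perf P R π μ γ - perf P R π' μ γ|

/-- Total variation distance. -/
def dTV {X : Type*} [Fintype X] (p q : X → ℝ) : ℝ :=
  (1 / 2) * ∑ x : X, |p x - q x|

/-- KL divergence. -/
def dKL {X : Type*} [Fintype X] (p q : X → ℝ) : ℝ :=
  ∑ x : X, p x * Real.log (p x / q x)

/-- Pearson chi-squared divergence (terms with `q x = 0` vanish by the `x / 0 = 0` convention). -/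
def dChi2 {X : Type*} [Fintype X] (p q : X → ℝ) : ℝ :=
  ∑ x : X, (p x - q x) ^ 2 / q x

/-- `Err_ρ(π1, π2, F)` for a reward-like function `F`. -/
def errF [Fintype S] [Fintype A] (ρ : S → ℝ) (π1 π2 : S → A → ℝ) (F : S → A → ℝ) : ℝ :=
  |∑ s : S, ρ s * ∑ a : A, (π1 s a - π2 s a) * F s a|

/-- `Err_ρ(π1, π2, G)` for a transition-like function `G`. -/
def errG [Fintype S] [Fintype A] (ρ : S → ℝ) (π1 π2 : S → A → ℝ) (G : S → A → S → ℝ) : ℝ :=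
  ∑ s' : S, |∑ s : S, ρ s * ∑ a : A, (π1 s a - π2 s a) * G s a s'|

/-- Marginalization `ρ_Z` of a state distribution onto `Z` via `φ`. -/
def margDist [Fintype S] [DecidableEq Z] (φ : S → Z) (ρ : S → ℝ) (z : Z) : ℝ :=
  ∑ s : S, if φ s = z then ρ s else 0

/-- Marginalization `π_Z` of a policy onto `Z` via `φ`, w.r.t. the state distribution `ρ`
(by the `x / 0 = 0` convention it takes a fixed arbitrary value when `ρ_Z(z) = 0`). -/
def margPolicy [Fintype S] [DecidableEq Z] (φ : S → Z) (ρ : S → ℝ) (π : S → A → ℝ)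
    (z : Z) (a : A) : ℝ :=
  (∑ s : S, if φ s = z then ρ s * π s a else 0) / margDist φ ρ z

/-- Log-linear (softmax) policy `π_θ(a|z)`. -/
def softmaxPol {d : ℕ} [Fintype A] (θ : A → Fin d → ℝ) (z : Fin d → ℝ) (a : A) : ℝ :=
  Real.exp (∑ i, θ a i * z i) / ∑ b : A, Real.exp (∑ i, θ b i * z i)

/-- Sum of absolute values of all partial derivatives of `L : ℝ^{d×|A|} → ℝ` at `θ`. -/
def gradL1 {d : ℕ} [Fintype A] [DecidableEq A] (L : (A → Fin d → ℝ) → ℝ)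
    (θ : A → Fin d → ℝ) : ℝ :=
  ∑ a : A, ∑ i : Fin d, |fderiv ℝ L θ (Pi.single a (Pi.single i 1))|

/-! The occupancy measure `m_π(s, a) = d^π(s) π(a|s)` satisfies the flow equation
`d^π = (1 - γ) μ + γ m_π P`, and `J(π)` is `(1 - γ)⁻¹` times the pairing of `m_π` with `R`. Pushing
forward along the transition kernel does not increase the `ℓ¹` norm, so the flow equations of `π*`
and `π` give
`‖m_{π*} - m_π‖₁ ≤ ‖d^{π*} - d^π‖₁ + 2 𝔼_{d^{π*}} D_TV(π*, π)
  ≤ γ ‖m_{π*} - m_π‖₁ + 2 𝔼_{d^{π*}} D_TV(π*, π)`.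
Solving for `‖m_{π*} - m_π‖₁` bounds the performance gap by the expected total variation, and
Pinsker's and Jensen's inequalities replace the latter by the expected KL divergence. -/

section Pinsker

open InformationTheory Set

-- The difference of the two sides vanishes to first order at `1`, and its second derivative is
-- `4 * (log x - (1 - x⁻¹))`.
lemma three_mul_sub_one_sq_le_mul_klFun {x : ℝ} (hx : 0 ≤ x) :
    3 * (x - 1) ^ 2 ≤ (2 * x + 4) * klFun x := by
  let f : ℝ → ℝ := fun y => (2 * y + 4) * klFun y - 3 * (y - 1) ^ 2
  let f' : ℝ → ℝ := fun y => 4 * (y + 1) * Real.log y - 8 * (y - 1)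
  let f'' : ℝ → ℝ := fun y => 4 * (Real.log y - (1 - y⁻¹))
  have hf : ∀ y, 0 < y → HasDerivAt f (f' y) y := fun y hy => by
    have h := ((((hasDerivAt_id' y).const_mul 2).add_const 4).mul (hasDerivAt_klFun hy.ne')).sub
      ((((hasDerivAt_id' y).sub_const 1).pow 2).const_mul 3)
    refine h.congr_deriv ?_
    simp only [f', klFun_apply]
    ring
  have hf' : ∀ y, 0 < y → HasDerivAt f' (f'' y) y := fun y hy => by
    have h := ((((hasDerivAt_id' y).add_const 1).const_mul 4).mul (Real.hasDerivAt_log hy.ne')).sub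
      (((hasDerivAt_id' y).sub_const 1).const_mul 8)
    refine h.congr_deriv ?_
    simp only [f'']
    field_simp
    ring
  have hf'' : ∀ y, 0 < y → 0 ≤ f'' y := fun y hy =>
    mul_nonneg zero_le_four (sub_nonneg.2 (Real.one_sub_inv_le_log_of_pos hy))
  have hconv : ConvexOn ℝ (Ici 0) f := by
    refine convexOn_of_hasDerivWithinAt2_nonneg (convex_Ici 0) (by fun_prop)
      (f' := f') (f'' := f'') ?_ ?_ ?_ <;> rw [interior_Ici]
    exacts [fun y hy => (hf y hy).hasDerivWithinAt, fun y hy => (hf' y hy).hasDerivWithinAt, hf'']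
  have hmin : IsMinOn f (Ici 0) 1 := by
    refine hconv.isMinOn_of_rightDeriv_eq_zero (by simp) ?_
    rw [(hf 1 one_pos).hasDerivWithinAt.derivWithin (uniqueDiffWithinAt_Ioi 1)]
    simp [f']
  have hf1 : f 1 = 0 := by simp [f, klFun_one]
  exact sub_nonneg.1 (hf1 ▸ hmin hx)

lemma sub_sq_le_mul_mul_klFun_div {p q : ℝ} (hp : 0 ≤ p) (hq : 0 ≤ q) (hpq : q = 0 → p = 0) :
    (p - q) ^ 2 ≤ (2 / 3 * p + 4 / 3 * q) * (q * klFun (p / q)) := by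
  rcases hq.eq_or_lt with rfl | hq
  · simp [hpq rfl]
  · calc (p - q) ^ 2 = q ^ 2 / 3 * (3 * (p / q - 1) ^ 2) := by field_simp
      _ ≤ q ^ 2 / 3 * ((2 * (p / q) + 4) * klFun (p / q)) := by
        exact mul_le_mul_of_nonneg_left (three_mul_sub_one_sq_le_mul_klFun (by positivity))
          (by positivity)
      _ = (2 / 3 * p + 4 / 3 * q) * (q * klFun (p / q)) := by field_simp

variable {X : Type*} [Fintype X] {p q : X → ℝ}

lemma dKL_eq_sum_mul_klFun (hsum : ∑ x, p x = ∑ x, q x) (hpq : ∀ x, q x = 0 → p x = 0) :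
    dKL p q = ∑ x, q x * klFun (p x / q x) := by
  have hterm : ∀ x, q x * klFun (p x / q x) = p x * Real.log (p x / q x) + (q x - p x) := by
    intro x
    by_cases hx : q x = 0
    · simp [hx, hpq x hx]
    · rw [klFun_apply]
      field_simp
      ring
  simp only [hterm, sum_add_distrib, sum_sub_distrib, hsum, sub_self, add_zero, dKL]

lemma sq_two_mul_dTV_le_two_mul_dKL (hp : p ∈ stdSimplex ℝ X) (hq : q ∈ stdSimplex ℝ X)
    (hpq : ∀ x, q x = 0 → p x = 0) : (2 * dTV p q) ^ 2 ≤ 2 * dKL p q := by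
  have hweight : ∑ x, (2 / 3 * p x + 4 / 3 * q x) = 2 := by
    rw [sum_add_distrib, ← mul_sum, ← mul_sum, hp.2, hq.2]
    norm_num
  calc (2 * dTV p q) ^ 2 = (∑ x, |p x - q x|) ^ 2 := by rw [dTV]; ring
    _ ≤ (∑ x, (2 / 3 * p x + 4 / 3 * q x)) * ∑ x, q x * klFun (p x / q x) := by
      refine sum_sq_le_sum_mul_sum_of_sq_le_mul _ (fun x _ => ?_) (fun x _ => ?_) (fun x _ => ?_)
      · linarith [hp.1 x, hq.1 x]
      · exact mul_nonneg (hq.1 x) (klFun_nonneg (div_nonneg (hp.1 x) (hq.1 x)))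
      · rw [sq_abs]
        exact sub_sq_le_mul_mul_klFun_div (hp.1 x) (hq.1 x) (hpq x)
    _ = 2 * dKL p q := by rw [hweight, dKL_eq_sum_mul_klFun (hp.2.trans hq.2.symm) hpq]

lemma two_mul_sum_mul_dTV_le_sqrt [Fintype S] {ρ : S → ℝ} {p q : S → X → ℝ}
    (hρ : ρ ∈ stdSimplex ℝ S) (hp : ∀ s, p s ∈ stdSimplex ℝ X) (hq : ∀ s, q s ∈ stdSimplex ℝ X)
    (hpq : ∀ s x, ρ s ≠ 0 → q s x = 0 → p s x = 0) :
    2 * ∑ s, ρ s * dTV (p s) (q s) ≤ √(2 * ∑ s, ρ s * dKL (p s) (q s)) := by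
  refine Real.le_sqrt_of_sq_le ?_
  calc (2 * ∑ s, ρ s * dTV (p s) (q s)) ^ 2
      = (∑ s, ρ s * (2 * dTV (p s) (q s))) ^ 2 := by simp only [mul_sum, mul_left_comm]
    _ ≤ ∑ s, ρ s * (2 * dTV (p s) (q s)) ^ 2 :=
      Real.pow_arith_mean_le_arith_mean_pow_of_even _ _ _ (fun s _ => hρ.1 s) hρ.2 even_two
    _ ≤ ∑ s, ρ s * (2 * dKL (p s) (q s)) := by
      refine sum_le_sum fun s _ => ?_
      rcases eq_or_ne (ρ s) 0 with hs | hs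
      · simp [hs]
      · exact mul_le_mul_of_nonneg_left
          (sq_two_mul_dTV_le_two_mul_dKL (hp s) (hq s) fun x => hpq s x hs) (hρ.1 s)
    _ = 2 * ∑ s, ρ s * dKL (p s) (q s) := by simp only [mul_sum, mul_left_comm]

end Pinsker

section Kernel

open scoped Matrix

variable {X Y : Type*} [Fintype X]

lemma abs_dotProduct_le {f : X → ℝ} {C : ℝ} (hf : ∀ x, |f x| ≤ C) (m : X → ℝ) :
    |m ⬝ᵥ f| ≤ C * ∑ x, |m x| := by
  rw [mul_sum]
  refine (abs_sum_le_sum_abs _ _).trans (sum_le_sum fun x _ => ?_)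
  rw [abs_mul, mul_comm]
  exact mul_le_mul_of_nonneg_right (hf x) (abs_nonneg _)

variable [Fintype Y] {K : Matrix X Y ℝ}

lemma sum_vecMul_of_sum_eq_one (hK : ∀ x, ∑ y, K x y = 1) (m : X → ℝ) :
    ∑ y, (m ᵥ* K) y = ∑ x, m x := by
  simp only [Matrix.vecMul, dotProduct]
  rw [sum_comm]
  simp only [← mul_sum, hK, mul_one]

lemma sum_abs_vecMul_le (hK : ∀ x, K x ∈ stdSimplex ℝ Y) (m : X → ℝ) :
    ∑ y, |(m ᵥ* K) y| ≤ ∑ x, |m x| := by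
  rw [← sum_vecMul_of_sum_eq_one (fun x => (hK x).2) fun x => |m x|]
  refine sum_le_sum fun y _ => (abs_sum_le_sum_abs _ _).trans_eq (sum_congr rfl fun x _ => ?_)
  rw [abs_mul, abs_of_nonneg ((hK x).1 y)]

end Kernel

section Occupancy

open scoped Matrix

/-- The joint weights `ρ(s) π(a|s)` on state-action pairs; for `ρ = d^π` this is the occupancy
measure of `π`. -/
def stateActionDist (ρ : S → ℝ) (π : S → A → ℝ) (x : S × A) : ℝ :=
  ρ x.1 * π x.1 x.2

/-- The transition function as a matrix with rows indexed by state-action pairs, so that the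
next-state distribution of joint weights `m` is the row-vector product `m ᵥ* transitionMatrix P`. -/
def transitionMatrix (P : S → A → S → ℝ) : Matrix (S × A) S ℝ :=
  Matrix.of (Function.uncurry P)

variable [Fintype S] [Fintype A] {P : S → A → S → ℝ} {π π' : S → A → ℝ} {μ : S → ℝ} {γ : ℝ}

lemma sum_stateActionDist (hπ : ∀ s, ∑ a, π s a = 1) (ρ : S → ℝ) :
    ∑ x, stateActionDist ρ π x = ∑ s, ρ s := by
  simp only [stateActionDist, Fintype.sum_prod_type, ← mul_sum, hπ, mul_one]

lemma sum_abs_stateActionDist (hπ : ∀ s, π s ∈ stdSimplex ℝ A) (ρ : S → ℝ) :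
    ∑ x, |stateActionDist ρ π x| = ∑ s, |ρ s| := by
  rw [← sum_stateActionDist (fun s => (hπ s).2) fun s => |ρ s|]
  refine sum_congr rfl fun x _ => ?_
  rw [stateActionDist, stateActionDist, abs_mul, abs_of_nonneg ((hπ x.1).1 x.2)]

lemma sum_abs_stateActionDist_sub_le (hπ' : ∀ s, π' s ∈ stdSimplex ℝ A) (ρ ρ' : S → ℝ) :
    ∑ x, |stateActionDist ρ π x - stateActionDist ρ' π' x| ≤
      ∑ s, |ρ s - ρ' s| + 2 * ∑ s, |ρ s| * dTV (π s) (π' s) := by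
  have hpolicy : ∑ x : S × A, |ρ x.1 * (π x.1 x.2 - π' x.1 x.2)| =
      2 * ∑ s, |ρ s| * dTV (π s) (π' s) := by
    simp only [Fintype.sum_prod_type, abs_mul, ← mul_sum, dTV]
    rw [mul_sum]
    exact sum_congr rfl fun s _ => by ring
  rw [← hpolicy, ← sum_abs_stateActionDist hπ' fun s => ρ s - ρ' s, ← sum_add_distrib]
  refine sum_le_sum fun x _ => ?_
  calc |stateActionDist ρ π x - stateActionDist ρ' π' x|
      = |stateActionDist (fun s => ρ s - ρ' s) π' x + ρ x.1 * (π x.1 x.2 - π' x.1 x.2)| := by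
        simp only [stateActionDist]
        ring_nf
    _ ≤ _ := abs_add_le _ _

lemma stateDist_succ (P : S → A → S → ℝ) (π : S → A → ℝ) (μ : S → ℝ) (t : ℕ) :
    stateDist P π μ (t + 1) =
      stateActionDist (stateDist P π μ t) π ᵥ* transitionMatrix P := by
  ext s'
  simp only [stateDist, Matrix.vecMul, dotProduct, Fintype.sum_prod_type, stateActionDist,
    transitionMatrix, Matrix.of_apply, Function.uncurry_apply_pair]
  exact sum_congr rfl fun s _ => sum_congr rfl fun a _ => by ring

lemma stateDist_nonneg (hP : ∀ s a s', 0 ≤ P s a s') (hπ : ∀ s a, 0 ≤ π s a) (hμ : ∀ s, 0 ≤ μ s)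
    (t : ℕ) (s : S) : 0 ≤ stateDist P π μ t s := by
  induction t generalizing s with
  | zero => exact hμ s
  | succ t ih =>
    exact sum_nonneg fun s' _ => sum_nonneg fun a _ =>
      mul_nonneg (mul_nonneg (hπ s' a) (hP s' a s)) (ih s')

lemma sum_abs_stateDist_le (hP : ∀ s a, P s a ∈ stdSimplex ℝ S) (hπ : ∀ s, π s ∈ stdSimplex ℝ A)
    (μ : S → ℝ) (t : ℕ) : ∑ s, |stateDist P π μ t s| ≤ ∑ s, |μ s| := by
  induction t with
  | zero => exact le_rfl
  | succ t ih =>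
    rw [stateDist_succ]
    refine (sum_abs_vecMul_le (K := transitionMatrix P) (fun x => hP x.1 x.2) _).trans ?_
    rwa [sum_abs_stateActionDist hπ]

lemma summable_pow_mul_stateDist (hP : ∀ s a, P s a ∈ stdSimplex ℝ S)
    (hπ : ∀ s, π s ∈ stdSimplex ℝ A) (μ : S → ℝ) (hγ : |γ| < 1) (s : S) :
    Summable fun t => γ ^ t * stateDist P π μ t s := by
  refine .of_norm_bounded
    ((summable_geometric_of_lt_one (abs_nonneg γ) hγ).mul_right (∑ s, |μ s|)) fun t => ?_
  rw [Real.norm_eq_abs, abs_mul, abs_pow]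
  gcongr
  exact (single_le_sum (fun s _ => abs_nonneg (stateDist P π μ t s)) (mem_univ s)).trans
    (sum_abs_stateDist_le hP hπ μ t)

lemma visitation_nonneg (hP : ∀ s a s', 0 ≤ P s a s') (hπ : ∀ s a, 0 ≤ π s a) (hμ : ∀ s, 0 ≤ μ s)
    (hγ0 : 0 ≤ γ) (hγ1 : γ ≤ 1) (s : S) : 0 ≤ visitation P π μ γ s :=
  mul_nonneg (sub_nonneg.2 hγ1) <| tsum_nonneg fun t =>
    mul_nonneg (pow_nonneg hγ0 t) (stateDist_nonneg hP hπ hμ t s)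

lemma stateActionDist_visitation_dotProduct (hP : ∀ s a, P s a ∈ stdSimplex ℝ S)
    (hπ : ∀ s, π s ∈ stdSimplex ℝ A) (μ : S → ℝ) (hγ : |γ| < 1) (f : S × A → ℝ) :
    stateActionDist (visitation P π μ γ) π ⬝ᵥ f =
      (1 - γ) * ∑' t, γ ^ t * (stateActionDist (stateDist P π μ t) π ⬝ᵥ f) := by
  have hsummable (x : S × A) :=
    (summable_pow_mul_stateDist hP hπ μ hγ x.1).mul_right (π x.1 x.2 * f x)
  calc stateActionDist (visitation P π μ γ) π ⬝ᵥ f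
      = (1 - γ) * ∑ x : S × A, ∑' t, γ ^ t * stateDist P π μ t x.1 * (π x.1 x.2 * f x) := by
        simp only [tsum_mul_right]
        simp only [dotProduct, stateActionDist, visitation, mul_assoc, ← mul_sum]
    _ = (1 - γ) * ∑' t, ∑ x : S × A, γ ^ t * stateDist P π μ t x.1 * (π x.1 x.2 * f x) := by
        rw [Summable.tsum_finsetSum fun x _ => hsummable x]
    _ = (1 - γ) * ∑' t, γ ^ t * (stateActionDist (stateDist P π μ t) π ⬝ᵥ f) := by
        simp only [dotProduct, stateActionDist, mul_sum, mul_assoc]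

lemma visitation_eq_add_vecMul (hP : ∀ s a, P s a ∈ stdSimplex ℝ S)
    (hπ : ∀ s, π s ∈ stdSimplex ℝ A) (μ : S → ℝ) (hγ : |γ| < 1) :
    visitation P π μ γ = (1 - γ) • μ +
      γ • (stateActionDist (visitation P π μ γ) π ᵥ* transitionMatrix P) := by
  ext s
  have hnext : (stateActionDist (visitation P π μ γ) π ᵥ* transitionMatrix P) s =
      (1 - γ) * ∑' t, γ ^ t * stateDist P π μ (t + 1) s := by
    simp only [stateDist_succ]
    exact stateActionDist_visitation_dotProduct hP hπ μ hγ _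
  simp only [Pi.add_apply, Pi.smul_apply, smul_eq_mul, hnext]
  rw [visitation, (summable_pow_mul_stateDist hP hπ μ hγ s).tsum_eq_zero_add, mul_left_comm γ,
    ← tsum_mul_left, ← mul_add]
  simp only [pow_zero, one_mul, pow_succ', mul_assoc, stateDist]

lemma sum_visitation (hP : ∀ s a, P s a ∈ stdSimplex ℝ S) (hπ : ∀ s, π s ∈ stdSimplex ℝ A)
    (μ : S → ℝ) (hγ : |γ| < 1) : ∑ s, visitation P π μ γ s = ∑ s, μ s := by
  have hflow := congrArg (fun ρ : S → ℝ => ∑ s, ρ s) (visitation_eq_add_vecMul hP hπ μ hγ)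
  simp only [Pi.add_apply, Pi.smul_apply, smul_eq_mul, sum_add_distrib, ← mul_sum] at hflow
  rw [sum_vecMul_of_sum_eq_one (K := transitionMatrix P) (fun x => (hP x.1 x.2).2),
    sum_stateActionDist (fun s => (hπ s).2)] at hflow
  have hγ' : 1 - γ ≠ 0 := (sub_pos.2 (lt_of_abs_lt hγ)).ne'
  exact mul_left_cancel₀ hγ' (by linarith)

lemma visitation_mem_stdSimplex (hP : ∀ s a, P s a ∈ stdSimplex ℝ S)
    (hπ : ∀ s, π s ∈ stdSimplex ℝ A) (hμ : μ ∈ stdSimplex ℝ S) (hγ0 : 0 ≤ γ) (hγ1 : γ < 1) :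
    visitation P π μ γ ∈ stdSimplex ℝ S :=
  ⟨visitation_nonneg (fun s a => (hP s a).1) (fun s => (hπ s).1) hμ.1 hγ0 hγ1.le,
    (sum_visitation hP hπ μ (by rwa [abs_of_nonneg hγ0])).trans hμ.2⟩

lemma one_sub_mul_perf (hP : ∀ s a, P s a ∈ stdSimplex ℝ S) (hπ : ∀ s, π s ∈ stdSimplex ℝ A)
    (R : S → A → ℝ) (μ : S → ℝ) (hγ : |γ| < 1) :
    (1 - γ) * perf P R π μ γ =
      stateActionDist (visitation P π μ γ) π ⬝ᵥ Function.uncurry R := by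
  rw [stateActionDist_visitation_dotProduct hP hπ μ hγ, perf]
  simp only [dotProduct, stateActionDist, Fintype.sum_prod_type, Function.uncurry_apply_pair]
  simp only [mul_comm, mul_left_comm]

lemma sum_abs_visitation_sub_le (hP : ∀ s a, P s a ∈ stdSimplex ℝ S)
    (hπ : ∀ s, π s ∈ stdSimplex ℝ A) (hπ' : ∀ s, π' s ∈ stdSimplex ℝ A) (μ : S → ℝ)
    (hγ : |γ| < 1) :
    ∑ s, |visitation P π μ γ s - visitation P π' μ γ s| ≤
      |γ| * ∑ x, |stateActionDist (visitation P π μ γ) π x -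
        stateActionDist (visitation P π' μ γ) π' x| := by
  set m := stateActionDist (visitation P π μ γ) π with hm
  set m' := stateActionDist (visitation P π' μ γ) π' with hm'
  have hflow : visitation P π μ γ - visitation P π' μ γ =
      γ • ((m - m') ᵥ* transitionMatrix P) := by
    rw [visitation_eq_add_vecMul hP hπ μ hγ, visitation_eq_add_vecMul hP hπ' μ hγ, ← hm, ← hm',
      add_sub_add_left_eq_sub, ← smul_sub, Matrix.sub_vecMul]
  calc ∑ s, |(visitation P π μ γ - visitation P π' μ γ) s|
      = |γ| * ∑ s, |((m - m') ᵥ* transitionMatrix P) s| := by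
        simp only [hflow, Pi.smul_apply, smul_eq_mul, abs_mul, mul_sum]
    _ ≤ |γ| * ∑ x, |m x - m' x| := by
        gcongr
        exact sum_abs_vecMul_le (K := transitionMatrix P) (fun x => hP x.1 x.2) (m - m')

lemma one_sub_mul_sum_abs_stateActionDist_visitation_sub_le (hP : ∀ s a, P s a ∈ stdSimplex ℝ S)
    (hπ : ∀ s, π s ∈ stdSimplex ℝ A) (hπ' : ∀ s, π' s ∈ stdSimplex ℝ A) (μ : S → ℝ)
    (hγ : |γ| < 1) :
    (1 - |γ|) * ∑ x, |stateActionDist (visitation P π μ γ) π x -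
        stateActionDist (visitation P π' μ γ) π' x| ≤
      2 * ∑ s, |visitation P π μ γ s| * dTV (π s) (π' s) := by
  have hjoint := sum_abs_stateActionDist_sub_le (π := π) hπ'
    (visitation P π μ γ) (visitation P π' μ γ)
  have hstate := sum_abs_visitation_sub_le hP hπ hπ' μ hγ
  linarith

lemma perfDiff_comm (P : S → A → S → ℝ) (R : S → A → ℝ) (μ : S → ℝ) (γ : ℝ) (π π' : S → A → ℝ) :
    perfDiff P R μ γ π π' = perfDiff P R μ γ π' π :=
  abs_sub_comm _ _

lemma perfDiff_le_mul_sum_mul_dTV {R : S → A → ℝ} {Rmax : ℝ}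
    (hP : ∀ s a, P s a ∈ stdSimplex ℝ S) (hRmax : 0 ≤ Rmax) (hR : ∀ s a, |R s a| ≤ Rmax)
    (hπ : ∀ s, π s ∈ stdSimplex ℝ A) (hπ' : ∀ s, π' s ∈ stdSimplex ℝ A) (μ : S → ℝ)
    (hγ0 : 0 ≤ γ) (hγ1 : γ < 1) :
    perfDiff P R μ γ π π' ≤
      Rmax / (1 - γ) ^ 2 * (2 * ∑ s, |visitation P π μ γ s| * dTV (π s) (π' s)) := by
  have hγ : |γ| < 1 := by rwa [abs_of_nonneg hγ0]
  have hγ' : 0 < 1 - γ := sub_pos.2 hγ1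
  set m := stateActionDist (visitation P π μ γ) π with hm
  set m' := stateActionDist (visitation P π' μ γ) π' with hm'
  have hperf : (1 - γ) * perfDiff P R μ γ π π' = |(m - m') ⬝ᵥ Function.uncurry R| := by
    rw [sub_dotProduct, hm, hm', ← one_sub_mul_perf hP hπ R μ hγ, ← one_sub_mul_perf hP hπ' R μ hγ,
      ← mul_sub, abs_mul, abs_of_pos hγ', perfDiff]
  have hoccupancy : (1 - γ) * ∑ x, |m x - m' x| ≤
      2 * ∑ s, |visitation P π μ γ s| * dTV (π s) (π' s) := by
    simpa only [abs_of_nonneg hγ0] using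
      one_sub_mul_sum_abs_stateActionDist_visitation_sub_le hP hπ hπ' μ hγ
  rw [div_mul_eq_mul_div, le_div_iff₀ (by positivity)]
  calc perfDiff P R μ γ π π' * (1 - γ) ^ 2
      = (1 - γ) * |(m - m') ⬝ᵥ Function.uncurry R| := by rw [← hperf]; ring
    _ ≤ (1 - γ) * (Rmax * ∑ x, |m x - m' x|) := by
        gcongr
        exact abs_dotProduct_le (fun x => hR x.1 x.2) (m - m')
    _ = Rmax * ((1 - γ) * ∑ x, |m x - m' x|) := mul_left_comm _ _ _
    _ ≤ Rmax * (2 * ∑ s, |visitation P π μ γ s| * dTV (π s) (π' s)) := by gcongr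

end Occupancy

theorem bc_performance_bound [Fintype S] [Fintype A] [Nonempty S] [Nonempty A]
    (P : S → A → S → ℝ) (hP0 : ∀ s a s', 0 ≤ P s a s')
    (hP1 : ∀ s a, ∑ s' : S, P s a s' = 1)
    (R : S → A → ℝ) (Rmax : ℝ) (hRmax : 0 ≤ Rmax) (hR : ∀ s a, |R s a| ≤ Rmax)
    (μ : S → ℝ) (hμ0 : ∀ s, 0 ≤ μ s) (hμ1 : ∑ s : S, μ s = 1)
    (γ : ℝ) (hγ0 : 0 ≤ γ) (hγ1 : γ < 1)
    (π πstar : S → A → ℝ)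
    (hπ0 : ∀ s a, 0 ≤ π s a) (hπ1 : ∀ s, ∑ a : A, π s a = 1)
    (hπs0 : ∀ s a, 0 ≤ πstar s a) (hπs1 : ∀ s, ∑ a : A, πstar s a = 1)
    (hpos : ∀ s a, 0 < visitation P πstar μ γ s → 0 < πstar s a → 0 < π s a) :
    perfDiff P R μ γ π πstar ≤
      Rmax / (1 - γ) ^ 2 *
        Real.sqrt (2 * ∑ s : S, visitation P πstar μ γ s * dKL (πstar s) (π s)) := by
  have hP : ∀ s a, P s a ∈ stdSimplex ℝ S := fun s a => ⟨hP0 s a, hP1 s a⟩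
  have hπ : ∀ s, π s ∈ stdSimplex ℝ A := fun s => ⟨hπ0 s, hπ1 s⟩
  have hπs : ∀ s, πstar s ∈ stdSimplex ℝ A := fun s => ⟨hπs0 s, hπs1 s⟩
  have hd : visitation P πstar μ γ ∈ stdSimplex ℝ S :=
    visitation_mem_stdSimplex hP hπs ⟨hμ0, hμ1⟩ hγ0 hγ1
  have hac : ∀ s a, visitation P πstar μ γ s ≠ 0 → π s a = 0 → πstar s a = 0 := by
    intro s a hs hzero
    by_contra hne
    exact (hpos s a ((hd.1 s).lt_of_ne' hs) ((hπs0 s a).lt_of_ne' hne)).ne' hzero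
  calc perfDiff P R μ γ π πstar = perfDiff P R μ γ πstar π := perfDiff_comm ..
    _ ≤ Rmax / (1 - γ) ^ 2 * (2 * ∑ s, |visitation P πstar μ γ s| * dTV (πstar s) (π s)) :=
      perfDiff_le_mul_sum_mul_dTV hP hRmax hR hπs hπ μ hγ0 hγ1
    _ = Rmax / (1 - γ) ^ 2 * (2 * ∑ s, visitation P πstar μ γ s * dTV (πstar s) (π s)) := by
      simp only [abs_of_nonneg (hd.1 _)]
    _ ≤ Rmax / (1 - γ) ^ 2 * √(2 * ∑ s, visitation P πstar μ γ s * dKL (πstar s) (π s)) := by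
      gcongr
      exact two_mul_sum_mul_dTV_le_sqrt hd hπs hπ hac
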